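/- arXiv:1906.10888 — 6 statements merged into one kernel-verified Lean document; each statement's English description precedes it below -/
import Mathlib

section
/- Let N ≥ 0 and M ≥ 1 be integers, Δt > 0, let J ⊂ ℤ be a finite set with weights ν_j ≥ 0 (j ∈ J) satisfying Δt·Σ_{j∈J} ν_j ≤ 1, and for each n ∈ {0,…,M−1}, i ∈ {0,…,N} let b_{n,i} ≥ 0, c_{n,i} ≥ 0 and a_{n,i} = b_{n,i} + c_{n,i}. If (u^n)_{0≤n≤M} is a solution of the explicit–implicit scheme with bounded initial data u^0, then the scheme is stable: for every n ∈ {0,…,M}, sup_{i∈ℤ} |u^n_i| ≤ sup_{i∈ℤ} |u^0_i|. -/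
open Finset

/-- `u` is a solution of the explicit–implicit scheme with parameters `N, M, Δt`,
jump set `J` with weights `ν`, and coefficients `a n i = b n i + c n i`:
`u n i = 0` whenever `i ∉ {0,…,N}`, and for `n ∈ {0,…,M−1}`, `i ∈ {0,…,N}`,
`−c_{n,i}Δt·u^{n+1}_{i−1} + (1 + a_{n,i}Δt)·u^{n+1}_i − b_{n,i}Δt·u^{n+1}_{i+1}
  = (1 − Δt·Σ_{j∈J} ν_j)·u^n_i + Δt·Σ_{j∈J} ν_j·u^n_{i+j}`. -/
def IsExplicitImplicitSol (N M : ℕ) (Δt : ℝ) (J : Finset ℤ) (ν : ℤ → ℝ)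
    (a b c : ℕ → ℤ → ℝ) (u : ℕ → ℤ → ℝ) : Prop :=
  (∀ n, n ≤ M → ∀ i : ℤ, ¬ (0 ≤ i ∧ i ≤ (N : ℤ)) → u n i = 0) ∧
  (∀ n, n < M → ∀ i : ℤ, 0 ≤ i → i ≤ (N : ℤ) →
    -(c n i * Δt) * u (n + 1) (i - 1) + (1 + a n i * Δt) * u (n + 1) i
        - b n i * Δt * u (n + 1) (i + 1)
      = (1 - Δt * ∑ j ∈ J, ν j) * u n i + Δt * ∑ j ∈ J, ν j * u n (i + j))

/-!
At time `n + 1` choose `m` where `|u^{n+1}|` is maximal; such an `m` exists in `{0,…,N}` because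
`u^{n+1}` vanishes elsewhere. The neighbours of `m` are then dominated by `u^{n+1}_m`, so the
diagonally dominant implicit row at `m` has absolute value at least `|u^{n+1}_m|`. The explicit side
is a convex combination of values of `u^n`, hence at most `sup |u^n|`.
-/

section Norm

variable {E : Type*} [SeminormedAddCommGroup E]

lemma exists_mem_forall_norm_le {ι : Type*} {s : Finset ι} (hs : s.Nonempty) {v : ι → E}
    (hv : ∀ i ∉ s, v i = 0) : ∃ m ∈ s, ∀ i, ‖v i‖ ≤ ‖v m‖ := by
  obtain ⟨m, hm, hmax⟩ := s.exists_max_image (‖v ·‖) hs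
  refine ⟨m, hm, fun i => ?_⟩
  by_cases hi : i ∈ s
  · exact hmax i hi
  · rw [hv i hi, norm_zero]
    exact norm_nonneg _

variable [NormedSpace ℝ E]

lemma norm_one_sub_sum_smul_add_sum_smul_le {ι : Type*} {s : Finset ι} {w : ι → ℝ}
    (hw : ∀ j ∈ s, 0 ≤ w j) (hsum : ∑ j ∈ s, w j ≤ 1) {K : ℝ} {x : E} (hx : ‖x‖ ≤ K)
    {y : ι → E} (hy : ∀ j ∈ s, ‖y j‖ ≤ K) :
    ‖(1 - ∑ j ∈ s, w j) • x + ∑ j ∈ s, w j • y j‖ ≤ K := by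
  have hsmul {t : ℝ} (ht : 0 ≤ t) {z : E} (hz : ‖z‖ ≤ K) : ‖t • z‖ ≤ t * K := by
    rw [norm_smul_of_nonneg ht]
    gcongr
  calc ‖(1 - ∑ j ∈ s, w j) • x + ∑ j ∈ s, w j • y j‖
      ≤ (1 - ∑ j ∈ s, w j) * K + ∑ j ∈ s, w j * K :=
        norm_add_le_of_le (hsmul (sub_nonneg.2 hsum) hx)
          (norm_sum_le_of_le s fun j hj => hsmul (hw j hj) (hy j hj))
    _ = K := by rw [← Finset.sum_mul]; ring

lemma norm_le_norm_one_add_smul_sub {a : ℝ} {x y : E} (hy : ‖y‖ ≤ a * ‖x‖) :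
    ‖x‖ ≤ ‖(1 + a) • x - y‖ :=
  calc ‖x‖ ≤ (1 + a) * ‖x‖ - ‖y‖ := by linarith
    _ ≤ ‖(1 + a) • x‖ - ‖y‖ := by
      rw [norm_smul]
      gcongr
      exact Real.le_norm_self _
    _ ≤ ‖(1 + a) • x - y‖ := norm_sub_norm_le _ _

lemma norm_le_norm_neg_smul_add_one_add_smul_sub_smul {a p q : ℝ} (hp : 0 ≤ p) (hq : 0 ≤ q)
    (hpq : p + q ≤ a) {x y z : E} (hy : ‖y‖ ≤ ‖x‖) (hz : ‖z‖ ≤ ‖x‖) :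
    ‖x‖ ≤ ‖-p • y + (1 + a) • x - q • z‖ := by
  have hoff : ‖p • y + q • z‖ ≤ a * ‖x‖ :=
    calc ‖p • y + q • z‖ ≤ p * ‖y‖ + q * ‖z‖ :=
          norm_add_le_of_le (norm_smul_of_nonneg hp y).le (norm_smul_of_nonneg hq z).le
      _ ≤ p * ‖x‖ + q * ‖x‖ := by gcongr
      _ = (p + q) * ‖x‖ := (add_mul p q ‖x‖).symm
      _ ≤ a * ‖x‖ := by gcongr
  convert norm_le_norm_one_add_smul_sub hoff using 2
  module

end Norm

namespace IsExplicitImplicitSol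

variable {N M : ℕ} {Δt : ℝ} {J : Finset ℤ} {ν : ℤ → ℝ} {a b c u : ℕ → ℤ → ℝ} {n : ℕ}

lemma exists_forall_abs_le (hu : IsExplicitImplicitSol N M Δt J ν a b c u) (hn : n ≤ M) :
    ∃ m : ℤ, 0 ≤ m ∧ m ≤ N ∧ ∀ i, |u n i| ≤ |u n m| := by
  obtain ⟨m, hm, hmax⟩ := exists_mem_forall_norm_le (s := Finset.Icc (0 : ℤ) N) (v := u n)
    (Finset.nonempty_Icc.2 N.cast_nonneg) fun i hi => hu.1 n hn i (by rwa [Finset.mem_Icc] at hi)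
  obtain ⟨hm0, hmN⟩ := Finset.mem_Icc.1 hm
  exact ⟨m, hm0, hmN, hmax⟩

lemma bddAbove_range_abs (hu : IsExplicitImplicitSol N M Δt J ν a b c u) (hn : n ≤ M) :
    BddAbove (Set.range fun i => |u n i|) := by
  obtain ⟨m, -, -, hmax⟩ := hu.exists_forall_abs_le hn
  exact ⟨|u n m|, Set.forall_mem_range.2 hmax⟩

lemma abs_succ_le (hu : IsExplicitImplicitSol N M Δt J ν a b c u) (hn : n < M) (hΔt : 0 ≤ Δt)
    (hν : ∀ j ∈ J, 0 ≤ ν j) (hCFL : Δt * ∑ j ∈ J, ν j ≤ 1)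
    (hb : ∀ i : ℤ, 0 ≤ i → i ≤ N → 0 ≤ b n i) (hc : ∀ i : ℤ, 0 ≤ i → i ≤ N → 0 ≤ c n i)
    (ha : ∀ i : ℤ, 0 ≤ i → i ≤ N → b n i + c n i ≤ a n i)
    {K : ℝ} (hK : ∀ i, |u n i| ≤ K) (i : ℤ) : |u (n + 1) i| ≤ K := by
  obtain ⟨m, hm0, hmN, hmax⟩ := hu.exists_forall_abs_le hn
  have hdiag : c n m * Δt + b n m * Δt ≤ a n m * Δt := by
    rw [← add_mul, add_comm]
    exact mul_le_mul_of_nonneg_right (ha m hm0 hmN) hΔt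
  have himplicit : |u (n + 1) m| ≤ |-(c n m * Δt) * u (n + 1) (m - 1)
      + (1 + a n m * Δt) * u (n + 1) m - b n m * Δt * u (n + 1) (m + 1)| :=
    norm_le_norm_neg_smul_add_one_add_smul_sub_smul (E := ℝ) (mul_nonneg (hc m hm0 hmN) hΔt)
      (mul_nonneg (hb m hm0 hmN) hΔt) hdiag (hmax (m - 1)) (hmax (m + 1))
  have hexplicit :
      |(1 - Δt * ∑ j ∈ J, ν j) * u n m + Δt * ∑ j ∈ J, ν j * u n (m + j)| ≤ K := by
    simp only [Finset.mul_sum, ← mul_assoc] at hCFL ⊢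
    exact norm_one_sub_sum_smul_add_sum_smul_le (y := fun j => u n (m + j))
      (fun j hj => mul_nonneg hΔt (hν j hj)) hCFL (hK m) fun j _ => hK (m + j)
  calc |u (n + 1) i| ≤ |u (n + 1) m| := hmax i
    _ ≤ _ := himplicit
    _ = _ := congrArg abs (hu.2 n hn m hm0 hmN)
    _ ≤ K := hexplicit

end IsExplicitImplicitSol

theorem stability_explicit_implicit_scheme_general
    {N M : ℕ} {Δt : ℝ} (hΔt : 0 ≤ Δt) {J : Finset ℤ} {ν : ℤ → ℝ}
    (hν : ∀ j ∈ J, 0 ≤ ν j) (hCFL : Δt * ∑ j ∈ J, ν j ≤ 1) {a b c : ℕ → ℤ → ℝ}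
    (hb : ∀ n, n < M → ∀ i : ℤ, 0 ≤ i → i ≤ N → 0 ≤ b n i)
    (hc : ∀ n, n < M → ∀ i : ℤ, 0 ≤ i → i ≤ N → 0 ≤ c n i)
    (ha : ∀ n, n < M → ∀ i : ℤ, 0 ≤ i → i ≤ N → b n i + c n i ≤ a n i)
    {u : ℕ → ℤ → ℝ} (hu : IsExplicitImplicitSol N M Δt J ν a b c u) :
    AntitoneOn (fun n => ⨆ i, |u n i|) (Set.Iic M) := by
  refine antitoneOn_of_add_one_le Set.ordConnected_Iic fun n _ hn hn_succ => ciSup_le ?_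
  exact hu.abs_succ_le hn_succ hΔt hν hCFL (hb n hn_succ) (hc n hn_succ) (ha n hn_succ)
    (le_ciSup (hu.bddAbove_range_abs hn))

/-- **Stability of the explicit–implicit scheme.** -/
theorem stability_explicit_implicit_scheme
    (N M : ℕ) (hM : 1 ≤ M) (Δt : ℝ) (hΔt : 0 < Δt)
    (J : Finset ℤ) (ν : ℤ → ℝ) (hν : ∀ j ∈ J, 0 ≤ ν j)
    (hCFL : Δt * ∑ j ∈ J, ν j ≤ 1)
    (a b c : ℕ → ℤ → ℝ)
    (hb : ∀ n, n < M → ∀ i : ℤ, 0 ≤ i → i ≤ (N : ℤ) → 0 ≤ b n i)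
    (hc : ∀ n, n < M → ∀ i : ℤ, 0 ≤ i → i ≤ (N : ℤ) → 0 ≤ c n i)
    (ha : ∀ n, n < M → ∀ i : ℤ, 0 ≤ i → i ≤ (N : ℤ) → a n i = b n i + c n i)
    (u : ℕ → ℤ → ℝ)
    (hu : IsExplicitImplicitSol N M Δt J ν a b c u)
    (hbdd : BddAbove (Set.range fun i : ℤ => |u 0 i|)) :
    ∀ n, n ≤ M → (⨆ i : ℤ, |u n i|) ≤ ⨆ i : ℤ, |u 0 i| := by
  intro n hn
  exact stability_explicit_implicit_scheme_general hΔt.le hν hCFL hb hc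
    (fun k hk i h0 hN => (ha k hk i h0 hN).ge) hu M.zero_le hn n.zero_le
end

section
/- Let N ≥ 0 and M ≥ 1 be integers, Δt > 0, let J ⊂ ℤ be a finite set with weights ν_j ≥ 0 (j ∈ J) satisfying Δt·Σ_{j∈J} ν_j ≤ 1, and for each n ∈ {0,…,M−1}, i ∈ {0,…,N} let b_{n,i} ≥ 0, c_{n,i} ≥ 0 and a_{n,i} = b_{n,i} + c_{n,i}. If (u^n) and (v^n) are two solutions of the explicit–implicit scheme (with the same coefficients and weights) whose initial data satisfy u^0_i ≥ v^0_i for every i ∈ ℤ, then the scheme is monotone: u^n_i ≥ v^n_i for every n ∈ {0,…,M} and every i ∈ ℤ. -/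
open Finset

/-!
The explicit half of a time step is monotone, because under the CFL condition it is a combination
of old values with nonnegative weights. The implicit half is inverse-monotone by a discrete minimum
principle: at a negative minimum of the difference of two solutions, strict diagonal dominance makes
the implicit operator negative. Alternating the two halves carries the ordering forward in time.
-/

section MinimumPrinciple

variable {ι R : Type*} [Ring R] [LinearOrder R] [IsStrictOrderedRing R]

theorem nonneg_of_sum_mul_le_of_sum_lt {S : Finset ι} {T : ι → Finset ι} {d : ι → R}
    {p : ι → ι → R} {w : ι → R} (hp : ∀ i ∈ S, ∀ j ∈ T i, 0 ≤ p i j)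
    (hd : ∀ i ∈ S, ∑ j ∈ T i, p i j < d i) (hext : ∀ i ∉ S, 0 ≤ w i)
    (hw : ∀ i ∈ S, ∑ j ∈ T i, p i j * w j ≤ d i * w i) : 0 ≤ w := by
  refine fun i => le_of_not_gt fun (hi : w i < 0) => ?_
  have hiS : i ∈ S := by_contra fun h => hi.not_ge (hext i h)
  obtain ⟨k, hkS, hmin⟩ := S.exists_min_image w ⟨i, hiS⟩
  have hk : w k < 0 := (hmin i hiS).trans_lt hi
  have hle (j : ι) : w k ≤ w j := by
    by_cases hj : j ∈ S
    · exact hmin j hj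
    · exact hk.le.trans (hext j hj)
  refine lt_irrefl (d k * w k) ?_
  calc d k * w k < (∑ j ∈ T k, p k j) * w k := mul_lt_mul_of_neg_right (hd k hkS) hk
    _ = ∑ j ∈ T k, p k j * w k := sum_mul ..
    _ ≤ ∑ j ∈ T k, p k j * w j :=
      sum_le_sum fun j hj => mul_le_mul_of_nonneg_left (hle j) (hp k hkS j hj)
    _ ≤ d k * w k := hw k hkS

end MinimumPrinciple

section Operators

variable {R : Type*} [CommRing R]

/-- The explicit half of a time step: the right-hand side of the scheme as a function of the old
time level `w`. -/
def explicitOp {ι : Type*} [Add ι] (Δt : R) (J : Finset ι) (ν w : ι → R) (i : ι) : R :=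
  (1 - Δt * ∑ j ∈ J, ν j) * w i + Δt * ∑ j ∈ J, ν j * w (i + j)

/-- The implicit half of a time step: the left-hand side of the scheme as a function of the new
time level `w`, with the coefficients `a`, `b`, `c` of that step. -/
def implicitOp (Δt : R) (a b c w : ℤ → R) (i : ℤ) : R :=
  -(c i * Δt) * w (i - 1) + (1 + a i * Δt) * w i - b i * Δt * w (i + 1)

/-- The residual of a grid function `u` in the scheme equation at the step from `n` to `n + 1`;
it vanishes on solutions. -/
def schemeResidual (Δt : R) (J : Finset ℤ) (ν : ℤ → R) (a b c u : ℕ → ℤ → R)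
    (n : ℕ) (i : ℤ) : R :=
  implicitOp Δt (a n) (b n) (c n) (u (n + 1)) i - explicitOp Δt J ν (u n) i

variable [LinearOrder R] [IsStrictOrderedRing R] {Δt : R}

theorem monotone_explicitOp {ι : Type*} [Add ι] {J : Finset ι} {ν : ι → R} (hΔt : 0 ≤ Δt)
    (hν : ∀ j ∈ J, 0 ≤ ν j) (hCFL : Δt * ∑ j ∈ J, ν j ≤ 1) :
    Monotone (explicitOp Δt J ν) := fun _ _ hvu i =>
  add_le_add (mul_le_mul_of_nonneg_left (hvu i) (sub_nonneg.mpr hCFL)) <|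
    mul_le_mul_of_nonneg_left
      (sum_le_sum fun j hj => mul_le_mul_of_nonneg_left (hvu (i + j)) (hν j hj)) hΔt

theorem le_of_implicitOp_le {S : Finset ℤ} {a b c u v : ℤ → R} (hΔt : 0 ≤ Δt)
    (hb : ∀ i ∈ S, 0 ≤ b i) (hc : ∀ i ∈ S, 0 ≤ c i)
    (hdom : ∀ i ∈ S, (b i + c i) * Δt < 1 + a i * Δt) (hext : ∀ i ∉ S, v i ≤ u i)
    (h : ∀ i ∈ S, implicitOp Δt a b c v i ≤ implicitOp Δt a b c u i) : v ≤ u := by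
  let p (i j : ℤ) : R := if j = i - 1 then c i * Δt else b i * Δt
  have sum_neighbours (i : ℤ) (f : ℤ → R) :
      ∑ j ∈ {i - 1, i + 1}, p i j * f j = c i * Δt * f (i - 1) + b i * Δt * f (i + 1) := by
    have hne : i + 1 ≠ i - 1 := by lia
    rw [sum_pair hne.symm]
    simp only [p, if_pos, if_neg hne]
  refine sub_nonneg.mp <| nonneg_of_sum_mul_le_of_sum_lt (S := S) (p := p)
    (T := fun i => {i - 1, i + 1}) (d := fun i => 1 + a i * Δt) (fun i hi j _ => ?_)
    (fun i hi => ?_) (fun i hi => sub_nonneg.mpr (hext i hi)) (fun i hi => ?_)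
  · dsimp only [p]
    split_ifs
    exacts [mul_nonneg (hc i hi) hΔt, mul_nonneg (hb i hi) hΔt]
  · have hsum := sum_neighbours i 1
    simp only [Pi.one_apply, mul_one] at hsum
    linarith [hdom i hi]
  · have hi' := h i hi
    simp only [implicitOp] at hi'
    rw [sum_neighbours]
    simp only [Pi.sub_apply]
    linarith

theorem monotonicity_explicit_implicit_scheme_general {M : ℕ} {S J : Finset ℤ} {ν : ℤ → R}
    {a b c u v : ℕ → ℤ → R} (hΔt : 0 ≤ Δt) (hν : ∀ j ∈ J, 0 ≤ ν j)
    (hCFL : Δt * ∑ j ∈ J, ν j ≤ 1)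
    (hb : ∀ n < M, ∀ i ∈ S, 0 ≤ b n i) (hc : ∀ n < M, ∀ i ∈ S, 0 ≤ c n i)
    (hdom : ∀ n < M, ∀ i ∈ S, (b n i + c n i) * Δt < 1 + a n i * Δt)
    (hext : ∀ n < M, ∀ i ∉ S, v (n + 1) i ≤ u (n + 1) i)
    (hres : ∀ n < M, ∀ i ∈ S,
      schemeResidual Δt J ν a b c v n i ≤ schemeResidual Δt J ν a b c u n i)
    (h0 : v 0 ≤ u 0) : ∀ n ≤ M, v n ≤ u n := by
  intro n
  induction n with
  | zero => exact fun _ => h0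
  | succ n ih =>
    intro hn
    refine le_of_implicitOp_le hΔt (hb n hn) (hc n hn) (hdom n hn) (hext n hn) fun i hi => ?_
    have hexplicit : explicitOp Δt J ν (v n) i ≤ explicitOp Δt J ν (u n) i :=
      monotone_explicitOp hΔt hν hCFL (ih (Nat.le_of_succ_le hn)) i
    simpa only [schemeResidual, sub_add_cancel] using add_le_add (hres n hn i hi) hexplicit

end Operators

namespace IsExplicitImplicitSol

variable {N M : ℕ} {Δt : ℝ} {J : Finset ℤ} {ν : ℤ → ℝ} {a b c u : ℕ → ℤ → ℝ} {n : ℕ} {i : ℤ}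

theorem eq_zero_of_notMem_Icc (hu : IsExplicitImplicitSol N M Δt J ν a b c u) (hn : n ≤ M)
    (hi : i ∉ Icc (0 : ℤ) N) : u n i = 0 :=
  hu.1 n hn i (mt mem_Icc.mpr hi)

theorem schemeResidual_eq_zero (hu : IsExplicitImplicitSol N M Δt J ν a b c u) (hn : n < M)
    (hi : i ∈ Icc (0 : ℤ) N) : schemeResidual Δt J ν a b c u n i = 0 :=
  have ⟨hi₀, hiN⟩ := mem_Icc.mp hi
  sub_eq_zero.mpr (hu.2 n hn i hi₀ hiN)

end IsExplicitImplicitSol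

/-- **Monotonicity of the explicit–implicit scheme**: if two solutions are ordered at time
`0`, they remain ordered at all later times. -/
theorem monotonicity_explicit_implicit_scheme
    (N M : ℕ) (hM : 1 ≤ M) (Δt : ℝ) (hΔt : 0 < Δt)
    (J : Finset ℤ) (ν : ℤ → ℝ) (hν : ∀ j ∈ J, 0 ≤ ν j)
    (hCFL : Δt * ∑ j ∈ J, ν j ≤ 1)
    (a b c : ℕ → ℤ → ℝ)
    (hb : ∀ n, n < M → ∀ i : ℤ, 0 ≤ i → i ≤ (N : ℤ) → 0 ≤ b n i)
    (hc : ∀ n, n < M → ∀ i : ℤ, 0 ≤ i → i ≤ (N : ℤ) → 0 ≤ c n i)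
    (ha : ∀ n, n < M → ∀ i : ℤ, 0 ≤ i → i ≤ (N : ℤ) → a n i = b n i + c n i)
    (u v : ℕ → ℤ → ℝ)
    (hu : IsExplicitImplicitSol N M Δt J ν a b c u)
    (hv : IsExplicitImplicitSol N M Δt J ν a b c v)
    (h0 : ∀ i : ℤ, v 0 i ≤ u 0 i) :
    ∀ n, n ≤ M → ∀ i : ℤ, v n i ≤ u n i := by
  simp only [← and_imp, ← mem_Icc] at hb hc ha
  have hext : ∀ n < M, ∀ i ∉ Icc (0 : ℤ) N, v (n + 1) i = u (n + 1) i := fun n hn i hi =>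
    (hv.eq_zero_of_notMem_Icc hn hi).trans (hu.eq_zero_of_notMem_Icc hn hi).symm
  have hres : ∀ n < M, ∀ i ∈ Icc (0 : ℤ) N,
      schemeResidual Δt J ν a b c v n i = schemeResidual Δt J ν a b c u n i := fun n hn i hi =>
    (hv.schemeResidual_eq_zero hn hi).trans (hu.schemeResidual_eq_zero hn hi).symm
  exact monotonicity_explicit_implicit_scheme_general hΔt.le hν hCFL hb hc
    (fun n hn i hi => by rw [ha n hn i hi]; exact lt_one_add _)
    (fun n hn i hi => (hext n hn i hi).le) (fun n hn i hi => (hres n hn i hi).le) h0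
end

section
/- Let N ≥ 0 and M ≥ 1 be integers, Δt > 0, let J ⊂ ℤ be a finite set with weights ν_j ≥ 0 (j ∈ J) satisfying Δt·Σ_{j∈J} ν_j ≤ 1, and for each n ∈ {0,…,M−1}, i ∈ {0,…,N} let b_{n,i} ≥ 0, c_{n,i} ≥ 0 and a_{n,i} = b_{n,i} + c_{n,i}. Let (u^n) be a solution of the explicit–implicit scheme, let (w^n) be a discrete supersolution with w^0_i ≥ u^0_i for all i ∈ {0,…,N}, and let (z^n) be a discrete subsolution with z^0_i ≤ u^0_i for all i ∈ {0,…,N}. Then z^n_i ≤ u^n_i ≤ w^n_i for every n ∈ {0,…,M} and every i ∈ ℤ. -/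
open Finset

/-- `w` is a discrete supersolution of the explicit–implicit scheme:
nonnegative outside `{0,…,N}` and the scheme relation holds with `≥`. -/
def IsDiscreteSupersol (N M : ℕ) (Δt : ℝ) (J : Finset ℤ) (ν : ℤ → ℝ)
    (a b c : ℕ → ℤ → ℝ) (w : ℕ → ℤ → ℝ) : Prop :=
  (∀ n, n ≤ M → ∀ i : ℤ, ¬ (0 ≤ i ∧ i ≤ (N : ℤ)) → 0 ≤ w n i) ∧
  (∀ n, n < M → ∀ i : ℤ, 0 ≤ i → i ≤ (N : ℤ) →
    -(c n i * Δt) * w (n + 1) (i - 1) + (1 + a n i * Δt) * w (n + 1) i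
        - b n i * Δt * w (n + 1) (i + 1)
      ≥ (1 - Δt * ∑ j ∈ J, ν j) * w n i + Δt * ∑ j ∈ J, ν j * w n (i + j))

/-- `z` is a discrete subsolution of the explicit–implicit scheme:
nonpositive outside `{0,…,N}` and the scheme relation holds with `≤`. -/
def IsDiscreteSubsol (N M : ℕ) (Δt : ℝ) (J : Finset ℤ) (ν : ℤ → ℝ)
    (a b c : ℕ → ℤ → ℝ) (z : ℕ → ℤ → ℝ) : Prop :=
  (∀ n, n ≤ M → ∀ i : ℤ, ¬ (0 ≤ i ∧ i ≤ (N : ℤ)) → z n i ≤ 0) ∧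
  (∀ n, n < M → ∀ i : ℤ, 0 ≤ i → i ≤ (N : ℤ) →
    -(c n i * Δt) * z (n + 1) (i - 1) + (1 + a n i * Δt) * z (n + 1) i
        - b n i * Δt * z (n + 1) (i + 1)
      ≤ (1 - Δt * ∑ j ∈ J, ν j) * z n i + Δt * ∑ j ∈ J, ν j * z n (i + j))

/-!
By linearity it suffices to show that a supersolution with nonnegative initial data stays
nonnegative. If it is nonnegative at time `n`, the CFL condition makes the explicit side of the
scheme a combination of its values with nonnegative weights, so the implicit operator maps the
values at time `n + 1` to a nonnegative grid function. That operator has nonpositive off-diagonal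
entries and is strictly diagonally dominant, which rules out a negative minimum at time `n + 1`.
-/

lemma nonneg_of_nonneg_at_minimum {ι α : Type*} [LinearOrder α] [Zero α] {s : Finset ι}
    {v : ι → α} (hout : ∀ i ∉ s, 0 ≤ v i) (hmin : ∀ k ∈ s, (∀ j, v k ≤ v j) → 0 ≤ v k) (i : ι) :
    0 ≤ v i := by
  by_cases hi : i ∈ s
  · obtain ⟨k, hks, hk⟩ := s.exists_min_image v ⟨i, hi⟩
    suffices hk_nonneg : 0 ≤ v k from hk_nonneg.trans (hk i hi)
    by_contra! hneg
    have hglobal (j : ι) : v k ≤ v j := by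
      by_cases hj : j ∈ s
      · exact hk j hj
      · exact hneg.le.trans (hout j hj)
    exact hneg.not_ge (hmin k hks hglobal)
  · exact hout i hi

lemma nonneg_of_tridiagonal_diagDominant {R : Type*} [Ring R] [LinearOrder R]
    [IsStrictOrderedRing R] {s : Finset ℤ} {lower diag upper v : ℤ → R}
    (hlower : ∀ i ∈ s, 0 ≤ lower i) (hupper : ∀ i ∈ s, 0 ≤ upper i)
    (hdom : ∀ i ∈ s, lower i + upper i < diag i) (hout : ∀ i ∉ s, 0 ≤ v i)
    (hv : ∀ i ∈ s, lower i * v (i - 1) + upper i * v (i + 1) ≤ diag i * v i) (i : ℤ) :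
    0 ≤ v i := by
  refine nonneg_of_nonneg_at_minimum hout (fun k hk hmin => ?_) i
  have hle : (lower k + upper k) * v k ≤ diag k * v k :=
    calc (lower k + upper k) * v k = lower k * v k + upper k * v k := add_mul _ _ _
      _ ≤ lower k * v (k - 1) + upper k * v (k + 1) :=
        add_le_add (mul_le_mul_of_nonneg_left (hmin _) (hlower k hk))
          (mul_le_mul_of_nonneg_left (hmin _) (hupper k hk))
      _ ≤ diag k * v k := hv k hk
  have hgap : 0 ≤ (diag k - (lower k + upper k)) * v k := by
    rw [sub_mul]
    exact sub_nonneg.2 hle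
  exact nonneg_of_mul_nonneg_right hgap (sub_pos.2 (hdom k hk))

section Scheme

variable {N M : ℕ} {Δt : ℝ} {J : Finset ℤ} {ν : ℤ → ℝ} {a b c u v w z : ℕ → ℤ → ℝ}

lemma IsExplicitImplicitSol.isDiscreteSupersol (hu : IsExplicitImplicitSol N M Δt J ν a b c u) :
    IsDiscreteSupersol N M Δt J ν a b c u :=
  ⟨fun n hn i hi => (hu.1 n hn i hi).ge, fun n hn i h0 h1 => (hu.2 n hn i h0 h1).ge⟩

lemma IsExplicitImplicitSol.isDiscreteSubsol (hu : IsExplicitImplicitSol N M Δt J ν a b c u) :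
    IsDiscreteSubsol N M Δt J ν a b c u :=
  ⟨fun n hn i hi => (hu.1 n hn i hi).le, fun n hn i h0 h1 => (hu.2 n hn i h0 h1).le⟩

lemma IsDiscreteSupersol.sub (hw : IsDiscreteSupersol N M Δt J ν a b c w)
    (hz : IsDiscreteSubsol N M Δt J ν a b c z) :
    IsDiscreteSupersol N M Δt J ν a b c (w - z) := by
  refine ⟨fun n hn i hi => sub_nonneg.2 ((hz.1 n hn i hi).trans (hw.1 n hn i hi)),
    fun n hn i h0 h1 => ?_⟩
  have hwi := hw.2 n hn i h0 h1
  have hzi := hz.2 n hn i h0 h1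
  simp only [Pi.sub_apply, mul_sub, sum_sub_distrib]
  linarith

lemma IsDiscreteSupersol.nonneg_succ (hv : IsDiscreteSupersol N M Δt J ν a b c v)
    (hΔt : 0 ≤ Δt) (hν : ∀ j ∈ J, 0 ≤ ν j) (hCFL : Δt * ∑ j ∈ J, ν j ≤ 1) {n : ℕ} (hn : n < M)
    (hb : ∀ i : ℤ, 0 ≤ i → i ≤ (N : ℤ) → 0 ≤ b n i)
    (hc : ∀ i : ℤ, 0 ≤ i → i ≤ (N : ℤ) → 0 ≤ c n i)
    (hdom : ∀ i : ℤ, 0 ≤ i → i ≤ (N : ℤ) → (b n i + c n i) * Δt < 1 + a n i * Δt)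
    (hvn : ∀ i, 0 ≤ v n i) (i : ℤ) : 0 ≤ v (n + 1) i := by
  have hexplicit (i : ℤ) : 0 ≤ (1 - Δt * ∑ j ∈ J, ν j) * v n i + Δt * ∑ j ∈ J, ν j * v n (i + j) :=
    add_nonneg (mul_nonneg (sub_nonneg.2 hCFL) (hvn i))
      (mul_nonneg hΔt (sum_nonneg fun j hj => mul_nonneg (hν j hj) (hvn (i + j))))
  refine nonneg_of_tridiagonal_diagDominant (s := Icc 0 (N : ℤ)) (lower := fun i => c n i * Δt)
    (diag := fun i => 1 + a n i * Δt) (upper := fun i => b n i * Δt) ?_ ?_ ?_ ?_ ?_ i <;>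
    intro i hi <;> rw [mem_Icc] at hi
  · exact mul_nonneg (hc i hi.1 hi.2) hΔt
  · exact mul_nonneg (hb i hi.1 hi.2) hΔt
  · linarith [hdom i hi.1 hi.2]
  · exact hv.1 (n + 1) hn i hi
  · linarith [hexplicit i, hv.2 n hn i hi.1 hi.2]

lemma IsDiscreteSupersol.nonneg (hv : IsDiscreteSupersol N M Δt J ν a b c v)
    (hΔt : 0 ≤ Δt) (hν : ∀ j ∈ J, 0 ≤ ν j) (hCFL : Δt * ∑ j ∈ J, ν j ≤ 1)
    (hb : ∀ n, n < M → ∀ i : ℤ, 0 ≤ i → i ≤ (N : ℤ) → 0 ≤ b n i)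
    (hc : ∀ n, n < M → ∀ i : ℤ, 0 ≤ i → i ≤ (N : ℤ) → 0 ≤ c n i)
    (hdom : ∀ n, n < M → ∀ i : ℤ, 0 ≤ i → i ≤ (N : ℤ) → (b n i + c n i) * Δt < 1 + a n i * Δt)
    (hv0 : ∀ i : ℤ, 0 ≤ i → i ≤ (N : ℤ) → 0 ≤ v 0 i) :
    ∀ n, n ≤ M → ∀ i : ℤ, 0 ≤ v n i := by
  intro n hn
  induction n with
  | zero =>
    intro i
    by_cases hi : 0 ≤ i ∧ i ≤ (N : ℤ)
    · exact hv0 i hi.1 hi.2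
    · exact hv.1 0 hn i hi
  | succ n ih =>
    exact hv.nonneg_succ hΔt hν hCFL hn (hb n hn) (hc n hn) (hdom n hn) (ih (Nat.le_of_succ_le hn))

theorem discrete_comparison_principle_general
    (hΔt : 0 ≤ Δt) (hν : ∀ j ∈ J, 0 ≤ ν j) (hCFL : Δt * ∑ j ∈ J, ν j ≤ 1)
    (hb : ∀ n, n < M → ∀ i : ℤ, 0 ≤ i → i ≤ (N : ℤ) → 0 ≤ b n i)
    (hc : ∀ n, n < M → ∀ i : ℤ, 0 ≤ i → i ≤ (N : ℤ) → 0 ≤ c n i)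
    (hdom : ∀ n, n < M → ∀ i : ℤ, 0 ≤ i → i ≤ (N : ℤ) → (b n i + c n i) * Δt < 1 + a n i * Δt)
    (hz : IsDiscreteSubsol N M Δt J ν a b c z) (hw : IsDiscreteSupersol N M Δt J ν a b c w)
    (h0 : ∀ i : ℤ, 0 ≤ i → i ≤ (N : ℤ) → z 0 i ≤ w 0 i) :
    ∀ n, n ≤ M → ∀ i : ℤ, z n i ≤ w n i := fun n hn i =>
  sub_nonneg.1 ((hw.sub hz).nonneg hΔt hν hCFL hb hc hdom
    (fun i hi0 hiN => sub_nonneg.2 (h0 i hi0 hiN)) n hn i)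

end Scheme

/-- **Discrete comparison principle**: a solution of the explicit–implicit scheme is
sandwiched between any discrete subsolution and supersolution ordered at time `0`. -/
theorem discrete_comparison_principle
    (N M : ℕ) (hM : 1 ≤ M) (Δt : ℝ) (hΔt : 0 < Δt)
    (J : Finset ℤ) (ν : ℤ → ℝ) (hν : ∀ j ∈ J, 0 ≤ ν j)
    (hCFL : Δt * ∑ j ∈ J, ν j ≤ 1)
    (a b c : ℕ → ℤ → ℝ)
    (hb : ∀ n, n < M → ∀ i : ℤ, 0 ≤ i → i ≤ (N : ℤ) → 0 ≤ b n i)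
    (hc : ∀ n, n < M → ∀ i : ℤ, 0 ≤ i → i ≤ (N : ℤ) → 0 ≤ c n i)
    (ha : ∀ n, n < M → ∀ i : ℤ, 0 ≤ i → i ≤ (N : ℤ) → a n i = b n i + c n i)
    (u w z : ℕ → ℤ → ℝ)
    (hu : IsExplicitImplicitSol N M Δt J ν a b c u)
    (hw : IsDiscreteSupersol N M Δt J ν a b c w)
    (hz : IsDiscreteSubsol N M Δt J ν a b c z)
    (hw0 : ∀ i : ℤ, 0 ≤ i → i ≤ (N : ℤ) → u 0 i ≤ w 0 i)
    (hz0 : ∀ i : ℤ, 0 ≤ i → i ≤ (N : ℤ) → z 0 i ≤ u 0 i) :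
    ∀ n, n ≤ M → ∀ i : ℤ, z n i ≤ u n i ∧ u n i ≤ w n i := by
  have hdom : ∀ n, n < M → ∀ i : ℤ, 0 ≤ i → i ≤ (N : ℤ) → (b n i + c n i) * Δt < 1 + a n i * Δt :=
    fun n hn i hi0 hiN => by rw [ha n hn i hi0 hiN]; exact lt_one_add _
  have hcomparison {x y : ℕ → ℤ → ℝ} := discrete_comparison_principle_general (z := x) (w := y)
    hΔt.le hν hCFL hb hc hdom
  exact fun n hn i => ⟨hcomparison hz hu.isDiscreteSupersol hz0 n hn i,
    hcomparison hu.isDiscreteSubsol hw hw0 n hn i⟩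
end

section
/- Let (Ω, ℱ, ℚ) be a probability space, let S : Ω → ℝ be a nonnegative random variable with C = E[e^S] < ∞, let H : ℝ → ℝ be a bounded measurable function with ‖H‖_∞ = sup_t |H(t)|, let Y : Ω → ℝ be a random variable, let x ∈ ℝ, and let M : Ω → ℝ be a random variable satisfying M ≤ |x| + S almost surely. Then for every A ∈ ℝ, the localization error satisfies | E[H(Y)] − E[𝟙_{{M < A}}·H(Y)] | ≤ C·‖H‖_∞·e^{−A + |x|}. -/
open MeasureTheory

/-!
The error is the integral of the payoff over `{A ≤ M}`. The payoff is bounded, and since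
`M ≤ c + S`, Chernoff's inequality for `S` at level `A - c` makes the measure of `{A ≤ M}`
exponentially small in `A`.
-/

section LocalizationError

open ProbabilityTheory

variable {Ω : Type*} [MeasurableSpace Ω] {μ : Measure Ω} [IsFiniteMeasure μ]
  {M S : Ω → ℝ} {c t : ℝ}

lemma measureReal_ge_le_exp_mul_mgf_of_ae_le_add (hM : ∀ᵐ ω ∂μ, M ω ≤ c + S ω) (ht : 0 ≤ t)
    (hS : Integrable (fun ω ↦ Real.exp (t * S ω)) μ) (A : ℝ) :
    μ.real {ω | A ≤ M ω} ≤ Real.exp (t * (-A + c)) * mgf S μ t := by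
  have h_sub : {ω | A ≤ M ω} ≤ᵐ[μ] {ω | A - c ≤ S ω} :=
    hM.mono fun ω hω (hA : A ≤ M ω) ↦ sub_le_iff_le_add'.2 (hA.trans hω)
  calc μ.real {ω | A ≤ M ω}
      ≤ μ.real {ω | A - c ≤ S ω} :=
        ENNReal.toReal_mono (measure_ne_top μ _) (measure_mono_ae h_sub)
    _ ≤ Real.exp (-t * (A - c)) * mgf S μ t := measure_ge_le_exp_mul_mgf (A - c) ht hS
    _ = Real.exp (t * (-A + c)) * mgf S μ t := by ring_nf

theorem localization_error_estimate_general {E : Type*} [NormedAddCommGroup E] [NormedSpace ℝ E]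
    (hS : Integrable (fun ω ↦ Real.exp (t * S ω)) μ) (ht : 0 ≤ t)
    {f : Ω → E} (hf : AEStronglyMeasurable f μ) {K : ℝ} (hfK : ∀ᵐ ω ∂μ, ‖f ω‖ ≤ K)
    (hM_meas : Measurable M) (hM : ∀ᵐ ω ∂μ, M ω ≤ c + S ω) (A : ℝ) :
    ‖∫ ω, f ω ∂μ - ∫ ω, {ω | M ω < A}.indicator f ω ∂μ‖
      ≤ mgf S μ t * K * Real.exp (t * (-A + c)) := by
  rcases eq_zero_or_neZero μ with rfl | _
  · simp
  obtain ⟨ω₀, hω₀⟩ := hfK.exists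
  have hK : 0 ≤ K := (norm_nonneg _).trans hω₀
  have h_meas : MeasurableSet {ω | M ω < A} := measurableSet_lt hM_meas measurable_const
  have h_compl : {ω | M ω < A}ᶜ = {ω | A ≤ M ω} := by ext; simp
  calc ‖∫ ω, f ω ∂μ - ∫ ω, {ω | M ω < A}.indicator f ω ∂μ‖
      ≤ μ.real {ω | A ≤ M ω} * K := by
        rw [integral_indicator h_meas, ← h_compl]
        exact norm_integral_sub_setIntegral_le hfK h_meas (.of_bound hf K hfK)
    _ ≤ Real.exp (t * (-A + c)) * mgf S μ t * K := by
        gcongr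
        exact measureReal_ge_le_exp_mul_mgf_of_ae_le_add hM ht hS A
    _ = mgf S μ t * K * Real.exp (t * (-A + c)) := by ring

end LocalizationError

/-- **Localization error estimate.** If `M ≤ |x| + S` a.s. with `S ≥ 0` and
`C = E[e^S] < ∞`, and `H` is bounded measurable, then for every `A`,
`|E[H(Y)] − E[1_{M<A}·H(Y)]| ≤ C·‖H‖_∞·e^{−A+|x|}`. -/
theorem localization_error_estimate
    {Ω : Type*} [MeasurableSpace Ω] (Q : Measure Ω) [IsProbabilityMeasure Q]
    (S : Ω → ℝ) (hSmeas : Measurable S) (hSnonneg : ∀ ω, 0 ≤ S ω)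
    (hSint : Integrable (fun ω => Real.exp (S ω)) Q)
    (H : ℝ → ℝ) (hHmeas : Measurable H)
    (hHbdd : BddAbove (Set.range fun t => |H t|))
    (Y : Ω → ℝ) (hYmeas : Measurable Y) (x : ℝ)
    (M : Ω → ℝ) (hMmeas : Measurable M)
    (hM : ∀ᵐ ω ∂Q, M ω ≤ |x| + S ω)
    (A : ℝ) :
    |(∫ ω, H (Y ω) ∂Q) - ∫ ω, Set.indicator {ω | M ω < A} (fun ω => H (Y ω)) ω ∂Q|
      ≤ (∫ ω, Real.exp (S ω) ∂Q) * (⨆ t : ℝ, |H t|) * Real.exp (-A + |x|) := by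
  simpa [ProbabilityTheory.mgf, Function.comp_def] using
    localization_error_estimate_general (by simpa using hSint) zero_le_one
      (hHmeas.comp hYmeas).aestronglyMeasurable (.of_forall fun ω ↦ le_ciSup hHbdd (Y ω))
      hMmeas hM A
end

section
/- Let (Ω, ℱ, ℚ) be a probability space, let Z and R be independent real random variables such that e^Z and e^R are integrable and E[e^Z] = 1, let H : ℝ → ℝ be Lipschitz with constant c₁ (i.e. |H(u) − H(v)| ≤ c₁|u − v| for all u, v), and let S₀ > 0 and x ∈ ℝ. Then | E[H(S₀·e^{x + Z + R})] − E[H(S₀·e^{x + Z})] | ≤ c₁·S₀·e^{x}·E[|e^R − 1|]. -/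
/-!
Write `X = S₀ e^{x+Z}` and `Y = e^R`. The Lipschitz bound reduces the estimate to
`E|XY - X| = E[|X| |Y - 1|]`, which independence factors as `E|X| E|Y - 1|`, and the martingale
normalization `E[e^Z] = 1` gives `E|X| = S₀ e^x`.
-/

open MeasureTheory ProbabilityTheory

open scoped ENNReal NNReal

section Lipschitz

variable {Ω E F : Type*} [MeasurableSpace Ω] {μ : Measure Ω} [IsFiniteMeasure μ]
  [NormedAddCommGroup E] [NormedAddCommGroup F] {K : ℝ≥0} {H : E → F} {f g : Ω → E}

theorem memLp_comp_of_lipschitzWith {p : ℝ≥0∞} (hH : LipschitzWith K H) (hf : MemLp f p μ) :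
    MemLp (H ∘ f) p μ := by
  have hH₀ : LipschitzWith K (fun u ↦ H u - H 0) := fun u v ↦ by simpa using hH u v
  simpa [Function.comp_def, Pi.add_def] using
    (hH₀.comp_memLp (sub_self _) hf).add (memLp_const (H 0))

theorem integrable_comp_of_lipschitzWith (hH : LipschitzWith K H) (hf : Integrable f μ) :
    Integrable (fun ω ↦ H (f ω)) μ :=
  memLp_one_iff_integrable.mp (memLp_comp_of_lipschitzWith hH (memLp_one_iff_integrable.mpr hf))

theorem norm_integral_comp_sub_integral_comp_le [NormedSpace ℝ F] (hH : LipschitzWith K H)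
    (hf : Integrable f μ) (hg : Integrable g μ) :
    ‖∫ ω, H (f ω) ∂μ - ∫ ω, H (g ω) ∂μ‖ ≤ K * ∫ ω, ‖f ω - g ω‖ ∂μ := by
  rw [← integral_sub (integrable_comp_of_lipschitzWith hH hf)
    (integrable_comp_of_lipschitzWith hH hg), ← integral_const_mul]
  exact norm_integral_le_of_norm_le ((hf.sub hg).norm.const_mul _)
    (.of_forall fun ω ↦ hH.norm_sub_le (f ω) (g ω))

end Lipschitz

section Independence

variable {Ω A F : Type*} [MeasurableSpace Ω] {μ : Measure Ω} [NormedRing A] [NormMulClass A]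
  [MeasurableSpace A] [BorelSpace A] {X Y : Ω → A}

theorem integral_norm_mul_sub_self_of_indepFun (hXY : IndepFun X Y μ)
    (hX : AEStronglyMeasurable X μ) (hY : AEStronglyMeasurable Y μ) :
    ∫ ω, ‖X ω * Y ω - X ω‖ ∂μ = (∫ ω, ‖X ω‖ ∂μ) * ∫ ω, ‖Y ω - 1‖ ∂μ := by
  have hindep : IndepFun (fun ω ↦ ‖X ω‖) (fun ω ↦ ‖Y ω - 1‖) μ :=
    hXY.comp (φ := fun a ↦ ‖a‖) (ψ := fun a ↦ ‖a - 1‖) (by fun_prop)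
      (Continuous.measurable (by fun_prop))
  calc ∫ ω, ‖X ω * Y ω - X ω‖ ∂μ
      = ∫ ω, ‖X ω‖ * ‖Y ω - 1‖ ∂μ := by simp only [← norm_mul, mul_sub_one]
    _ = (∫ ω, ‖X ω‖ ∂μ) * ∫ ω, ‖Y ω - 1‖ ∂μ :=
        hindep.integral_fun_mul_eq_mul_integral (by fun_prop) (by fun_prop)

theorem norm_integral_comp_mul_sub_integral_comp_le_of_indepFun [IsFiniteMeasure μ]
    [NormedAddCommGroup F] [NormedSpace ℝ F] {K : ℝ≥0} {H : A → F} (hH : LipschitzWith K H)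
    (hXY : IndepFun X Y μ) (hX : Integrable X μ) (hY : Integrable Y μ) :
    ‖∫ ω, H (X ω * Y ω) ∂μ - ∫ ω, H (X ω) ∂μ‖
      ≤ K * ((∫ ω, ‖X ω‖ ∂μ) * ∫ ω, ‖Y ω - 1‖ ∂μ) := by
  rw [← integral_norm_mul_sub_self_of_indepFun hXY hX.aestronglyMeasurable
    hY.aestronglyMeasurable]
  exact norm_integral_comp_sub_integral_comp_le hH (hXY.integrable_mul hX hY) hX

end Independence

theorem truncation_error_estimate_general {Ω F : Type*} [MeasurableSpace Ω]
    [NormedAddCommGroup F] [NormedSpace ℝ F] {Q : Measure Ω} [IsFiniteMeasure Q]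
    {Z R : Ω → ℝ} (hindep : IndepFun Z R Q)
    (hZint : Integrable (fun ω ↦ Real.exp (Z ω)) Q)
    (hRint : Integrable (fun ω ↦ Real.exp (R ω)) Q)
    {K : ℝ≥0} {H : ℝ → F} (hH : LipschitzWith K H) (S₀ x : ℝ) :
    ‖(∫ ω, H (S₀ * Real.exp (x + Z ω + R ω)) ∂Q) - ∫ ω, H (S₀ * Real.exp (x + Z ω)) ∂Q‖
      ≤ K * |S₀| * Real.exp x * (∫ ω, Real.exp (Z ω) ∂Q) * ∫ ω, |Real.exp (R ω) - 1| ∂Q := by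
  have hX : Integrable (fun ω ↦ S₀ * Real.exp (x + Z ω)) Q := by
    simpa only [Real.exp_add] using (hZint.const_mul (Real.exp x)).const_mul S₀
  have hXY : IndepFun (fun ω ↦ S₀ * Real.exp (x + Z ω)) (fun ω ↦ Real.exp (R ω)) Q :=
    hindep.comp (φ := fun z ↦ S₀ * Real.exp (x + z)) (by fun_prop) Real.measurable_exp
  have hX_abs : ∫ ω, |S₀ * Real.exp (x + Z ω)| ∂Q
      = |S₀| * Real.exp x * ∫ ω, Real.exp (Z ω) ∂Q := by
    simp only [abs_mul, Real.abs_exp, Real.exp_add, integral_const_mul, mul_assoc]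
  simpa only [Real.norm_eq_abs, hX_abs, mul_assoc, ← Real.exp_add] using
    norm_integral_comp_mul_sub_integral_comp_le_of_indepFun hH hXY hX hRint

/-- **Jump-truncation error core estimate.** For independent `Z, R` with `E[e^Z] = 1`
and `H` Lipschitz with constant `c₁`,
`|E[H(S₀e^{x+Z+R})] − E[H(S₀e^{x+Z})]| ≤ c₁·S₀·e^x·E[|e^R − 1|]`. -/
theorem truncation_error_estimate
    {Ω : Type*} [MeasurableSpace Ω] (Q : Measure Ω) [IsProbabilityMeasure Q]
    (Z R : Ω → ℝ) (hZmeas : Measurable Z) (hRmeas : Measurable R)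
    (hindep : IndepFun Z R Q)
    (hZint : Integrable (fun ω => Real.exp (Z ω)) Q)
    (hRint : Integrable (fun ω => Real.exp (R ω)) Q)
    (hZmean : ∫ ω, Real.exp (Z ω) ∂Q = 1)
    (H : ℝ → ℝ) (c₁ : ℝ) (hH : ∀ u v : ℝ, |H u - H v| ≤ c₁ * |u - v|)
    (S₀ x : ℝ) (hS₀ : 0 < S₀) :
    |(∫ ω, H (S₀ * Real.exp (x + Z ω + R ω)) ∂Q)
        - ∫ ω, H (S₀ * Real.exp (x + Z ω)) ∂Q|
      ≤ c₁ * S₀ * Real.exp x * ∫ ω, |Real.exp (R ω) - 1| ∂Q := by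
  lift c₁ to ℝ≥0 using by simpa using (abs_nonneg _).trans (hH 1 0)
  have hLip : LipschitzWith c₁ H := .of_dist_le_mul hH
  simpa only [hZmean, mul_one, abs_of_pos hS₀, Real.norm_eq_abs] using
    truncation_error_estimate_general hindep hZint hRint hLip S₀ x
end

section
/- Let g : ℝ → ℝ be a nonnegative integrable function, let v : ℝ → ℝ be differentiable with ‖v'‖_∞ = sup_t |v'(t)| < ∞, let Δx > 0, let K_l ≤ K_r be integers, and let x ∈ ℝ. Then the trapezoidal-type quadrature error satisfies | Σ_{j=K_l}^{K_r} ∫_{(j−1/2)Δx}^{(j+1/2)Δx} ( v(x + jΔx) − v(x + y) )·g(y) dy | ≤ (Δx/2)·‖v'‖_∞·∫_ℝ g(y) dy. -/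
open MeasureTheory intervalIntegral

/-!
On the cell centred at `jΔx`, every `y` lies within `Δx / 2` of the centre, so the integrand there
is at most `(Δx / 2) ‖v'‖_∞ g y`. The cells are disjoint, so summing this dominating function
over them costs no more than its integral over the whole line.
-/

theorem norm_sum_setIntegral_le_of_norm_le {ι α E : Type*} [MeasurableSpace α]
    [NormedAddCommGroup E] [NormedSpace ℝ E] {μ : Measure α} {s : Finset ι} {A : ι → Set α}
    (hA : ∀ i ∈ s, MeasurableSet (A i)) (hdisj : (s : Set ι).PairwiseDisjoint A)
    {F : ι → α → E} {b : α → ℝ} (hb : ∀ i ∈ s, IntegrableOn b (A i) μ)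
    (hF : ∀ i ∈ s, ∀ a ∈ A i, ‖F i a‖ ≤ b a) :
    ‖∑ i ∈ s, ∫ a in A i, F i a ∂μ‖ ≤ ∫ a in ⋃ i ∈ s, A i, b a ∂μ := by
  rw [integral_biUnion_finset s hA hdisj hb]
  exact norm_sum_le_of_le s fun i hi =>
    norm_integral_le_of_norm_le (hb i hi) (ae_restrict_of_forall_mem (hA i hi) (hF i hi))

theorem lipschitzWith_iSup_norm_deriv {𝕜 F : Type*} [RCLike 𝕜] [NormedAddCommGroup F]
    [NormedSpace 𝕜 F] {f : 𝕜 → F} (hf : Differentiable 𝕜 f)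
    (hbdd : BddAbove (Set.range fun t => ‖deriv f t‖)) :
    LipschitzWith (⨆ t, ‖deriv f t‖₊) f := by
  have hbdd_nnnorm : BddAbove (Set.range fun t => ‖deriv f t‖₊) :=
    NNReal.bddAbove_coe.1 (by rwa [← Set.range_comp])
  exact lipschitzWith_of_nnnorm_deriv_le hf (le_ciSup hbdd_nnnorm)

/-- The cell of the uniform grid of mesh `h` centred at the node `j * h`. It is half-open so that
distinct cells are disjoint and so that integrating over it agrees with the interval integral. -/
def gridCell (h : ℝ) (j : ℤ) : Set ℝ :=
  Set.Ioc (((j : ℝ) - 1 / 2) * h) (((j : ℝ) + 1 / 2) * h)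

namespace gridCell

theorem measurableSet (h : ℝ) (j : ℤ) : MeasurableSet (gridCell h j) :=
  measurableSet_Ioc

theorem pairwise_disjoint (h : ℝ) : Pairwise (Function.onFun Disjoint (gridCell h)) := by
  convert Set.pairwise_disjoint_Ioc_add_zsmul (-(h / 2)) h using 3 with j
  rw [gridCell, zsmul_eq_mul, zsmul_eq_mul]
  congr 1 <;> push_cast <;> ring

theorem abs_node_sub_le {h y : ℝ} {j : ℤ} (hy : y ∈ gridCell h j) : |j * h - y| ≤ h / 2 :=
  abs_le.2 ⟨by linarith [hy.2], by linarith [hy.1]⟩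

theorem intervalIntegral_eq_setIntegral {E : Type*} [NormedAddCommGroup E] [NormedSpace ℝ E]
    {h : ℝ} (hh : 0 ≤ h) (j : ℤ) (f : ℝ → E) (μ : Measure ℝ) :
    ∫ y in ((j : ℝ) - 1 / 2) * h..((j : ℝ) + 1 / 2) * h, f y ∂μ = ∫ y in gridCell h j, f y ∂μ :=
  integral_of_le (mul_le_mul_of_nonneg_right (by linarith) hh)

end gridCell

theorem norm_sub_le_of_mem_gridCell {E : Type*} [SeminormedAddCommGroup E] {v : ℝ → E}
    {K : NNReal} (hv : LipschitzWith K v) {h y : ℝ} {j : ℤ} (hy : y ∈ gridCell h j) (x : ℝ) :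
    ‖v (x + j * h) - v (x + y)‖ ≤ h / 2 * K :=
  calc ‖v (x + j * h) - v (x + y)‖
    _ ≤ K * |x + j * h - (x + y)| := hv.norm_sub_le _ _
    _ = K * |j * h - y| := by rw [add_sub_add_left_eq_sub]
    _ ≤ K * (h / 2) := by gcongr; exact gridCell.abs_node_sub_le hy
    _ = h / 2 * K := mul_comm _ _

theorem quadrature_error_jump_term_general {E : Type*} [NormedAddCommGroup E] [NormedSpace ℝ E]
    [CompleteSpace E] {μ : Measure ℝ} {g : ℝ → ℝ} (hg : Integrable g μ) {v : ℝ → E} {K : NNReal}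
    (hv : LipschitzWith K v) {h : ℝ} (hh : 0 ≤ h) (s : Finset ℤ) (x : ℝ) :
    ‖∑ j ∈ s, ∫ y in ((j : ℝ) - 1 / 2) * h..((j : ℝ) + 1 / 2) * h,
        g y • (v (x + j * h) - v (x + y)) ∂μ‖ ≤ h / 2 * K * ∫ y, ‖g y‖ ∂μ := by
  have hint : Integrable (fun y => h / 2 * K * ‖g y‖) μ := hg.norm.const_mul _
  have hbound (j : ℤ) (y : ℝ) (hy : y ∈ gridCell h j) :
      ‖g y • (v (x + j * h) - v (x + y))‖ ≤ h / 2 * K * ‖g y‖ := by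
    rw [norm_smul, mul_comm]
    gcongr
    exact norm_sub_le_of_mem_gridCell hv hy x
  simp_rw [gridCell.intervalIntegral_eq_setIntegral hh]
  calc ‖∑ j ∈ s, ∫ y in gridCell h j, g y • (v (x + j * h) - v (x + y)) ∂μ‖
    _ ≤ ∫ y in ⋃ j ∈ s, gridCell h j, h / 2 * K * ‖g y‖ ∂μ :=
      norm_sum_setIntegral_le_of_norm_le (fun j _ => gridCell.measurableSet h j)
        ((gridCell.pairwise_disjoint h).set_pairwise _) (fun _ _ => hint.integrableOn)
        fun j _ => hbound j
    _ ≤ ∫ y, h / 2 * K * ‖g y‖ ∂μ :=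
      setIntegral_le_integral hint (Filter.Eventually.of_forall fun y => by positivity)
    _ = h / 2 * K * ∫ y, ‖g y‖ ∂μ := MeasureTheory.integral_const_mul _ _

/-- **Quadrature error for the jump integral.** The trapezoidal-type quadrature of the
integral term satisfies
`|Σ_j ∫_{(j−1/2)Δx}^{(j+1/2)Δx} (v(x+jΔx) − v(x+y)) g(y) dy| ≤ (Δx/2)·‖v'‖_∞·∫ g`. -/
theorem quadrature_error_jump_term
    (g : ℝ → ℝ) (hg0 : ∀ y, 0 ≤ g y) (hgint : Integrable g (volume : Measure ℝ))
    (v : ℝ → ℝ) (hv : Differentiable ℝ v)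
    (hbdd : BddAbove (Set.range fun t => |deriv v t|))
    (Δx : ℝ) (hΔx : 0 < Δx) (K_l K_r : ℤ) (hK : K_l ≤ K_r) (x : ℝ) :
    |∑ j ∈ Finset.Icc K_l K_r,
        ∫ y in ((j : ℝ) - 1 / 2) * Δx..((j : ℝ) + 1 / 2) * Δx,
          (v (x + (j : ℝ) * Δx) - v (x + y)) * g y|
      ≤ Δx / 2 * (⨆ t : ℝ, |deriv v t|) * ∫ y : ℝ, g y := by
  simpa only [smul_eq_mul, mul_comm (g _), Real.norm_eq_abs, abs_of_nonneg (hg0 _),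
    NNReal.coe_iSup, coe_nnnorm] using
    quadrature_error_jump_term_general hgint (lipschitzWith_iSup_norm_deriv hv hbdd) hΔx.le
      (Finset.Icc K_l K_r) x
end
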